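/- For a connected graph G of diameter 3 with h(G) ≥ 3, cfc(G) = h(G). -/

import Mathlib

open SimpleGraph

/-- An edge coloring makes `G` conflict-free connected if every pair of distinct
vertices is joined by a path on which some color appears on exactly one edge. -/
def IsCFConnColoring {V : Type*} (G : SimpleGraph V) (c : Sym2 V → ℕ) : Prop :=
  ∀ u v : V, u ≠ v → ∃ p : G.Walk u v, p.IsPath ∧
    ∃ col : ℕ, (p.edges.filter (fun e => c e = col)).length = 1

/-- The conflict-free connection number of `G`. -/
noncomputable def cfConn {V : Type*} (G : SimpleGraph V) : ℕ :=
  sInf {k | ∃ c : Sym2 V → ℕ, (∀ e ∈ G.edgeSet, c e < k) ∧ IsCFConnColoring G c}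

/-- The subgraph `C(G)` of `G` induced by the set of cut-edges (bridges). -/
def bridgeGraph {V : Type*} (G : SimpleGraph V) : SimpleGraph V :=
  SimpleGraph.fromEdgeSet {e | G.IsBridge e}

/-- `h(G)`: the maximum of `cfConn` over the components of the forest of cut-edges
of `G` (it equals `0` if `G` has no cut-edge). -/
noncomputable def hG {V : Type*} (G : SimpleGraph V) : ℕ :=
  sSup {n | ∃ comp : (bridgeGraph G).ConnectedComponent,
    n = cfConn ((bridgeGraph G).induce comp.supp)}

namespace SimpleGraph

variable {V : Type*} {G : SimpleGraph V}

lemma Connected.adj_of_isBridge (hG : G.Connected) {u v : V} (h : G.IsBridge s(u, v)) :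
    G.Adj u v :=
  h.reachable_iff_adj.1 (hG u v)

lemma IsBridge.mem_edges_of_mem_edges_isPath {e : Sym2 V} (he : G.IsBridge e) {x y : V}
    {p : G.Walk x y} (hp : p.IsPath) (hep : e ∈ p.edges) (q : G.Walk x y) : e ∈ q.edges := by
  induction p with
  | nil => simp at hep
  | cons h p ih =>
    rw [Walk.edges_cons, List.mem_cons] at hep
    have hnd := hp.isTrail.edges_nodup
    rw [Walk.edges_cons, List.nodup_cons] at hnd
    rcases hep with rfl | hep
    · have := isBridge_iff_forall_walk_mem_edges.1 he (q.append p.reverse)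
      rw [Walk.edges_append, List.mem_append, Walk.edges_reverse, List.mem_reverse] at this
      exact this.resolve_right hnd.1
    · have := ih hp.of_cons hep (Walk.cons h.symm q)
      rw [Walk.edges_cons, List.mem_cons] at this
      rcases this with rfl | this
      · exact absurd (Sym2.eq_swap ▸ hep) hnd.1
      · exact this

lemma Walk.IsPath.eq_of_forall_isBridge {x y : V} {p q : G.Walk x y} (hp : p.IsPath)
    (hq : q.IsPath) (hb : ∀ e ∈ p.edges, G.IsBridge e) : q = p := by
  induction p with
  | nil => exact (Walk.isPath_iff_nil.1 hq).eq_nil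
  | @cons x w y h p ih =>
    have hmem := (hb _ (by simp)).mem_edges_of_mem_edges_isPath hp
      (List.mem_cons_self) q
    cases q with
    | nil => simp at hmem
    | @cons _ w' _ h' q =>
      rw [Walk.edges_cons, List.mem_cons] at hmem
      rcases hmem with hmem | hmem
      · obtain rfl : w = w' := by
          rcases Sym2.eq_iff.1 hmem with ⟨-, h⟩ | ⟨h, h''⟩
          · exact h
          · exact h''.trans h
        rw [ih hp.of_cons hq.of_cons fun e he => hb e (by simp [he])]
      · exact absurd (Walk.fst_mem_support_of_mem_edges _ hmem)
          (Walk.cons_isPath_iff _ _ |>.1 hq).2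

lemma not_isBridge_of_triangle {a b c : V} (hab : G.Adj a b) (hbc : G.Adj b c)
    (hac : G.Adj a c) : ¬ G.IsBridge s(a, b) := by
  intro h
  have := isBridge_iff_forall_walk_mem_edges.1 h (.cons hac (.cons hbc.symm .nil))
  have := hab.ne
  have := hbc.ne
  have := hac.ne
  simp_all

lemma IsTree.edgeSet_of_isBridge {T : SimpleGraph V} (hT : T.IsTree) (hle : T ≤ G)
    {e : Sym2 V} (he : G.IsBridge e) : e ∈ T.edgeSet := by
  induction e with | h u v =>
  exact hT.1.adj_of_isBridge (he.anti hle)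

/-- Replacing a nonbridge `g` on a tree path by a single edge outside the tree. -/
lemma IsTree.exists_isPath_existsUnique_notMem_edgeSet {T : SimpleGraph V} (hT : T.IsTree)
    (hG : G.Connected) (hle : T ≤ G) {x y : V} {p : T.Walk x y} (hp : p.IsPath) {g : Sym2 V}
    (hg : g ∈ p.edges) (hgb : ¬ G.IsBridge g) :
    ∃ q : G.Walk x y, q.IsPath ∧ ∃ m ∈ q.edges, m ∉ T.edgeSet ∧
      ∀ e ∈ q.edges, e ∉ T.edgeSet → e = m := by
  classical
  induction g with | h a b =>
  have hxy : ¬ (T.deleteEdges {s(a, b)}).Reachable x y := by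
    rintro ⟨w⟩
    have hb := isAcyclic_iff_forall_isBridge.1 hT.2 (Walk.edges_subset_edgeSet p hg)
    have hw := hb.mem_edges_of_mem_edges_isPath hp hg (w.mapLe (deleteEdges_le _))
    rw [Walk.edges_mapLe_eq_edges] at hw
    simpa using w.edges_subset_edgeSet hw
  have hab (t : V) : (T.deleteEdges {s(a, b)}).Reachable t a ∨
      (T.deleteEdges {s(a, b)}).Reachable t b := by
    suffices ∀ r, T.Walk t r → (T.deleteEdges {s(a, b)}).Reachable r a →
        (T.deleteEdges {s(a, b)}).Reachable t a ∨ (T.deleteEdges {s(a, b)}).Reachable t b from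
      this a (hT.1 t a).some .rfl
    intro r w hr
    induction w with
    | nil => exact .inl hr
    | @cons t t' _ h w ih =>
      by_cases he : s(t, t') = s(a, b)
      · rcases Sym2.eq_iff.1 he with ⟨rfl, rfl⟩ | ⟨rfl, rfl⟩
        · exact .inl .rfl
        · exact .inr .rfl
      · have h' : (T.deleteEdges {s(a, b)}).Adj t t' := by simp [h, he]
        exact (ih hr).imp h'.reachable.trans h'.reachable.trans
  obtain ⟨w⟩ := hG.connected_delete_edge_of_not_isBridge hgb x y
  obtain ⟨⟨⟨s, t⟩, hst⟩, -, hs, ht⟩ :=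
    w.exists_boundary_dart {z | (T.deleteEdges {s(a, b)}).Reachable x z} .rfl hxy
  simp only [Set.mem_ofPred_eq] at hs ht hst
  have hty : (T.deleteEdges {s(a, b)}).Reachable t y := by
    rcases hab x with hx | hx <;> rcases hab y with hy | hy <;> rcases hab t with h | h
    all_goals first
      | exact absurd (hx.trans hy.symm) hxy
      | exact absurd (hx.trans h.symm) ht
      | exact h.trans hy.symm
  obtain ⟨q₁, hq₁⟩ := hs.exists_isPath
  obtain ⟨q₂, hq₂⟩ := hty.exists_isPath
  have hle' := (deleteEdges_le (G := T) {s(a, b)}).trans hle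
  rw [deleteEdges_adj] at hst
  have hmem {c d : V} (q : (T.deleteEdges {s(a, b)}).Walk c d) :
      ∀ e ∈ q.edges, e ∈ T.edgeSet := fun e he =>
    edgeSet_mono (deleteEdges_le _) (q.edges_subset_edgeSet he)
  refine ⟨(q₁.mapLe hle').append (.cons hst.1 (q₂.mapLe hle')), ?_, s(s, t), by simp, ?_, fun e he heT => ?_⟩
  · rw [Walk.isPath_def, Walk.support_append, Walk.support_cons, List.tail_cons,
      Walk.support_mapLe_eq_support, Walk.support_mapLe_eq_support, List.nodup_append']
    refine ⟨hq₁.support_nodup, hq₂.support_nodup, fun z hz₁ hz₂ => ht ?_⟩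
    exact (q₁.takeUntil z hz₁).reachable.trans (q₂.takeUntil z hz₂).reachable.symm
  · intro h
    refine ht (hs.trans (Adj.reachable ?_))
    rw [deleteEdges_adj]
    exact ⟨h, hst.2⟩
  · rw [Walk.edges_append, Walk.edges_cons, Walk.edges_mapLe_eq_edges,
      Walk.edges_mapLe_eq_edges, List.mem_append, List.mem_cons] at he
    rcases he with he | he | he
    · exact absurd (hmem q₁ e he) heT
    · exact he
    · exact absurd (hmem q₂ e he) heT

/-- A finite forest with all degrees at most `h` has a proper edge coloring with `h` colors. -/
lemma IsAcyclic.exists_proper_edge_coloring [Fintype V] {h : ℕ} (n : ℕ) (H : SimpleGraph V)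
    (hn : H.edgeSet.ncard = n) (hH : H.IsAcyclic)
    (hdeg : ∀ v, (H.neighborSet v).ncard ≤ h) :
    ∃ c : Sym2 V → ℕ, (∀ e ∈ H.edgeSet, c e < h) ∧
      ∀ x y z, H.Adj x y → H.Adj x z → y ≠ z → c s(x, y) ≠ c s(x, z) := by
  classical
  induction n generalizing H with
  | zero =>
    rw [Set.ncard_eq_zero] at hn
    refine ⟨fun _ => 0, by simp [hn], fun x y z hxy => ?_⟩
    rw [← mem_edgeSet, hn] at hxy
    exact hxy.elim
  | succ n ih =>
    obtain ⟨e, he⟩ : H.edgeSet.Nonempty := Set.nonempty_of_ncard_ne_zero (by omega)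
    induction e with | h u v =>
    rw [mem_edgeSet] at he
    set F := H.deleteEdges {s(u, v)} with hF
    have hFH : F ≤ H := deleteEdges_le _
    have hbr : ¬ F.Reachable u v := isBridge_iff.1 (isAcyclic_iff_forall_isBridge.1 hH he)
    obtain ⟨c, hc, hcp⟩ := ih F
      (by rw [hF, edgeSet_deleteEdges, Set.ncard_sdiff_singleton_of_mem (H.mem_edgeSet.2 he), hn]; rfl)
      (hH.anti hFH) fun w => (Set.ncard_le_ncard (fun _ hz => hFH hz) (Set.toFinite _)).trans (hdeg w)
    have missing (w w' : V) (hw : H.Adj w w') (hww : ¬ F.Adj w w') :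
        ∃ a < h, ∀ z, F.Adj w z → c s(w, z) ≠ a := by
      by_contra! hcon
      have h1 : Set.Iio h ⊆ (fun z => c s(w, z)) '' F.neighborSet w := fun a ha => hcon a ha
      have h2 := Set.ncard_le_ncard h1 (Set.toFinite _)
      have h3 := Set.ncard_image_le (f := fun z => c s(w, z)) (Set.toFinite (F.neighborSet w))
      have h4 : (F.neighborSet w).ncard < (H.neighborSet w).ncard :=
        Set.ncard_lt_ncard ⟨fun _ hz => hFH hz, fun hh => hww (hh hw)⟩ (Set.toFinite _)
      have h5 := hdeg w
      have h6 : (Set.Iio h).ncard = h := by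
        rw [← Finset.coe_Iio, Set.ncard_coe_finset]; simp
      omega
    obtain ⟨a, ha, hau⟩ := missing u v he (by simp [hF])
    obtain ⟨b, hb, hbv⟩ := missing v u he.symm (by simp [hF, Sym2.eq_swap])
    have hflag {x y : V} (hxy : F.Adj x y) :
        (∃ z ∈ s(x, y), F.Reachable v z) ↔ F.Reachable v x := by
      constructor
      · rintro ⟨z, hz, hvz⟩
        rcases Sym2.mem_iff.1 hz with rfl | rfl
        · exact hvz
        · exact hvz.trans hxy.symm.reachable
      · exact fun hx => ⟨x, by simp, hx⟩
    let c' : Sym2 V → ℕ := fun e => if e = s(u, v) then a else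
      if ∃ z ∈ e, F.Reachable v z then Equiv.swap a b (c e) else c e
    have hFadj {x y : V} (hxy : H.Adj x y) (hne : s(x, y) ≠ s(u, v)) : F.Adj x y := by
      simp [hF, hxy, hne]
    have key {x y z : V} (hxy : s(x, y) = s(u, v)) (hxz : F.Adj x z) : c' s(x, z) ≠ a := by
      have hne : s(x, z) ≠ s(u, v) := by
        have := (deleteEdges_adj.1 hxz).2
        simpa using this
      simp only [c', if_neg hne, hflag hxz]
      rcases Sym2.eq_iff.1 hxy with ⟨rfl, rfl⟩ | ⟨rfl, rfl⟩
      · rw [if_neg fun hr => hbr hr.symm]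
        exact hau z hxz
      · rw [if_pos .rfl]
        intro hsw
        rw [Equiv.swap_apply_eq_iff, Equiv.swap_apply_left] at hsw
        exact hbv z hxz hsw
    refine ⟨c', fun e he' => ?_, fun x y z hxy hxz hyz => ?_⟩
    · by_cases heq : e = s(u, v)
      · simpa [c', heq] using ha
      · have hce : c e < h := hc e (by rw [hF, edgeSet_deleteEdges]; exact ⟨he', heq⟩)
        simp only [c', if_neg heq]
        split_ifs
        · rw [Equiv.swap_apply_def]
          split_ifs <;> assumption
        · exact hce
    · by_cases h1 : s(x, y) = s(u, v)
      · have h2 : s(x, z) ≠ s(u, v) := fun h2 => hyz (Sym2.congr_right.1 (h1.trans h2.symm))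
        have := key h1 (hFadj hxz h2)
        rw [show c' s(x, y) = a by simp [c', h1]]
        exact this.symm
      · by_cases h2 : s(x, z) = s(u, v)
        · rw [show c' s(x, z) = a by simp [c', h2]]
          exact key h2 (hFadj hxy h1)
        · have hA := hFadj hxy h1
          have hB := hFadj hxz h2
          simp only [c', if_neg h1, if_neg h2, hflag hA, hflag hB]
          have := hcp x y z hA hB hyz
          split_ifs
          · exact fun h => this ((Equiv.swap a b).injective h)
          · exact this

lemma bridgeGraph_adj {u v : V} :
    (bridgeGraph G).Adj u v ↔ G.IsBridge s(u, v) ∧ u ≠ v := by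
  simp [bridgeGraph]

lemma Connected.bridgeGraph_le (hconn : G.Connected) : bridgeGraph G ≤ G := fun _ _ h =>
  hconn.adj_of_isBridge (bridgeGraph_adj.1 h).1

lemma isBridge_of_mem_edgeSet_bridgeGraph {e : Sym2 V} (he : e ∈ (bridgeGraph G).edgeSet) :
    G.IsBridge e := by
  induction e with | h u v => exact (bridgeGraph_adj.1 he).1

lemma Connected.mem_edgeSet_bridgeGraph (hconn : G.Connected) {e : Sym2 V} (he : G.IsBridge e) :
    e ∈ (bridgeGraph G).edgeSet := by
  induction e with | h u v => exact bridgeGraph_adj.2 ⟨he, (hconn.adj_of_isBridge he).ne⟩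

lemma Connected.isAcyclic_bridgeGraph (hconn : G.Connected) : (bridgeGraph G).IsAcyclic :=
  isAcyclic_iff_forall_isBridge.2 fun _ he =>
    (isBridge_of_mem_edgeSet_bridgeGraph he).anti hconn.bridgeGraph_le

lemma Connected.exists_isCFConnColoring [Finite V] (hconn : G.Connected) :
    ∃ k, ∃ c : Sym2 V → ℕ, (∀ e ∈ G.edgeSet, c e < k) ∧ IsCFConnColoring G c := by
  obtain ⟨k, ⟨f⟩⟩ := Finite.exists_equiv_fin (Sym2 V)
  refine ⟨k, fun e => f e, fun e _ => (f e).2, fun u v huv => ?_⟩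
  obtain ⟨p, hp⟩ := (hconn u v).exists_isPath
  refine ⟨p, hp, ?_⟩
  cases p with
  | nil => exact absurd rfl huv
  | @cons _ w _ h p =>
    refine ⟨f s(u, w), ?_⟩
    have hnd := hp.isTrail.edges_nodup
    rw [Walk.edges_cons, List.nodup_cons] at hnd
    rw [Walk.edges_cons, List.filter_cons_of_pos (by simp), List.length_cons,
      List.filter_eq_nil_iff.2]
    · rfl
    · intro e he heq
      have : e = s(u, w) := f.injective (Fin.ext (by simpa using heq))
      exact hnd.1 (this ▸ he)

lemma Connected.exists_lt_cfConn [Finite V] (hconn : G.Connected) :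
    ∃ c : Sym2 V → ℕ, (∀ e ∈ G.edgeSet, c e < cfConn G) ∧ IsCFConnColoring G c :=
  Nat.sInf_mem (s := {k | ∃ c : Sym2 V → ℕ, (∀ e ∈ G.edgeSet, c e < k) ∧ IsCFConnColoring G c})
    hconn.exists_isCFConnColoring

lemma Connected.cfConn_induce_bridgeGraph_le [Finite V] (hconn : G.Connected)
    (comp : (bridgeGraph G).ConnectedComponent) :
    cfConn ((bridgeGraph G).induce comp.supp) ≤ cfConn G := by
  obtain ⟨c, hc, hcf⟩ := hconn.exists_lt_cfConn
  let f : (bridgeGraph G).induce comp.supp →g G := ⟨Subtype.val, fun h => hconn.bridgeGraph_le h⟩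
  have hf : Function.Injective f := Subtype.val_injective
  refine Nat.sInf_le ⟨fun e => c (e.map f), fun e he => hc _ ?_, fun u v huv => ?_⟩
  · induction e with | h x y => exact f.map_adj he
  · have huv' : ((bridgeGraph G).induce comp.supp).Reachable u v :=
      comp.connected_toSimpleGraph u v
    obtain ⟨p, hp⟩ := huv'.exists_isPath
    obtain ⟨q, hq, col, hcol⟩ := hcf (f u) (f v) (hf.ne huv)
    have hqp : q = Walk.map f p := by
      refine (hp.map hf).eq_of_forall_isBridge hq fun e he => ?_
      obtain ⟨e', he', rfl⟩ := List.mem_map.1 (Walk.edges_map f p ▸ he)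
      have := Walk.edges_subset_edgeSet p he'
      induction e' with | h x y => exact (bridgeGraph_adj.1 this).1
    refine ⟨p, hp, col, ?_⟩
    rw [hqp, Walk.edges_map, List.filter_map, List.length_map] at hcol
    exact hcol

lemma Connected.hG_le_cfConn [Finite V] (hconn : G.Connected) : hG G ≤ cfConn G := by
  refine csSup_le' ?_
  rintro _ ⟨comp, rfl⟩
  exact hconn.cfConn_induce_bridgeGraph_le comp

lemma IsAcyclic.ncard_neighborSet_le_cfConn [Finite V] (hconn : G.Connected) (hA : G.IsAcyclic)
    (v : V) : (G.neighborSet v).ncard ≤ cfConn G := by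
  obtain ⟨c, hc, hcf⟩ := hconn.exists_lt_cfConn
  have hIio : (Set.Iio (cfConn G)).ncard = cfConn G := by
    rw [← Finset.coe_Iio, Set.ncard_coe_finset]; simp
  rw [← hIio]
  refine Set.ncard_le_ncard_of_injOn (fun x => c s(v, x)) (fun x hx => hc _ hx) ?_
    (Set.finite_Iio _)
  intro x hx y hy hxy
  by_contra hne
  obtain ⟨q, hq, col, hcol⟩ := hcf x y hne
  have hx' : G.Adj v x := hx
  have hy' : G.Adj v y := hy
  have hp : (Walk.cons hx'.symm (Walk.cons hy' .nil)).IsPath := by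
    simp [Walk.cons_isPath_iff, hne, hx'.ne', hy'.ne]
  obtain rfl : q = _ := congrArg Subtype.val
    ((hA.subsingleton_path x y).elim ⟨q, hq⟩ ⟨_, hp⟩)
  have hxy' : c s(x, v) = c s(v, y) := Sym2.eq_swap (a := x) ▸ hxy
  simp only [Walk.edges_cons, Walk.edges_nil, List.filter_cons, hxy'] at hcol
  split_ifs at hcol <;> simp at hcol

lemma Connected.ncard_neighborSet_bridgeGraph_le_hG [Finite V] (hconn : G.Connected) (v : V) :
    ((bridgeGraph G).neighborSet v).ncard ≤ hG G := by
  let comp := (bridgeGraph G).connectedComponentMk v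
  have hv : v ∈ comp.supp := rfl
  have h1 := (hconn.isAcyclic_bridgeGraph.induce comp.supp).ncard_neighborSet_le_cfConn
    comp.connected_toSimpleGraph ⟨v, hv⟩
  have h2 : cfConn ((bridgeGraph G).induce comp.supp) ≤ hG G :=
    le_csSup ⟨cfConn G, by rintro _ ⟨comp, rfl⟩; exact hconn.cfConn_induce_bridgeGraph_le comp⟩
      ⟨comp, rfl⟩
  refine le_trans ?_ (h1.trans h2)
  have himg : (bridgeGraph G).neighborSet v ⊆
      Subtype.val '' (((bridgeGraph G).induce comp.supp).neighborSet ⟨v, hv⟩) := fun x hx =>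
    ⟨⟨x, (comp.mem_supp_congr_adj hx).1 hv⟩, hx, rfl⟩
  exact (Set.ncard_le_ncard himg (Set.toFinite _)).trans (Set.ncard_image_le (Set.toFinite _))

/-- An edge coloring is proper on the bridges of `G`. -/
def IsProperOnBridges (G : SimpleGraph V) (b : Sym2 V → ℕ) : Prop :=
  ∀ x y z, G.IsBridge s(x, y) → G.IsBridge s(x, z) → b s(x, y) = b s(x, z) → y = z

lemma IsProperOnBridges.notMem {b : Sym2 V → ℕ} (hb : IsProperOnBridges G b) {e₁ e₂ : Sym2 V}
    (h₁ : G.IsBridge e₁) (h₂ : G.IsBridge e₂) (hne : e₁ ≠ e₂) (heq : b e₁ = b e₂) {z : V}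
    (hz₁ : z ∈ e₁) : z ∉ e₂ := by
  intro hz₂
  obtain ⟨y₁, rfl⟩ := hz₁
  obtain ⟨y₂, rfl⟩ := hz₂
  exact hne (hb _ _ _ h₁ h₂ heq ▸ rfl)

/-- Some edge of the walk `p` has a color which no other edge of `p` has. -/
def Walk.HasUniqueColor (c : Sym2 V → ℕ) {x y : V} (p : G.Walk x y) : Prop :=
  ∃ e ∈ p.edges, ∀ e' ∈ p.edges, c e' = c e → e' = e

lemma isCFConnColoring_of_hasUniqueColor {c : Sym2 V → ℕ}
    (h : ∀ x y : V, x ≠ y → ∃ p : G.Walk x y, p.IsPath ∧ p.HasUniqueColor c) :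
    IsCFConnColoring G c := by
  classical
  intro x y hxy
  obtain ⟨p, hp, e, he, hu⟩ := h x y hxy
  refine ⟨p, hp, c e, ?_⟩
  have : p.edges.filter (fun e' => c e' = c e) = p.edges.filter (fun e' => e' = e) := by
    refine List.filter_congr fun e' he' => ?_
    simp only [decide_eq_decide]
    exact ⟨hu e' he', fun h => h ▸ rfl⟩
  rw [this, ← List.countP_eq_length_filter]
  exact List.count_eq_one_of_mem hp.isTrail.edges_nodup he

lemma Walk.IsPath.exists_eq_of_length_le_three {x y : V} {q : G.Walk x y} (hq : q.IsPath)
    (hlen : q.length ≤ 3) {e₁ e₂ : Sym2 V} (h₁ : e₁ ∈ q.edges) (h₂ : e₂ ∈ q.edges)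
    (hdisj : ∀ z ∈ e₁, z ∉ e₂) :
    ∃ u v, [x, u, v, y].Nodup ∧ G.Adj u v ∧ q.edges = [s(x, u), s(u, v), s(v, y)] ∧
      (e₁ = s(x, u) ∧ e₂ = s(v, y) ∨ e₂ = s(x, u) ∧ e₁ = s(v, y)) := by
  have hnd := hq.support_nodup
  rcases q with - | ⟨hxu, - | ⟨huv, - | ⟨hvy, - | ⟨hyw, q⟩⟩⟩⟩
  · simp at h₁
  · simp only [Walk.edges_cons, Walk.edges_nil, List.mem_singleton] at h₁ h₂
    subst h₁ h₂
    exact absurd (Sym2.mem_mk_left _ _) (hdisj x (Sym2.mem_mk_left _ _))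
  · rename_i u
    simp only [Walk.edges_cons, Walk.edges_nil, List.mem_cons, List.not_mem_nil, or_false]
      at h₁ h₂
    have := hdisj u
    rcases h₁ with rfl | rfl <;> rcases h₂ with rfl | rfl <;> simp at this
  · rename_i u v
    refine ⟨u, v, by simpa using hnd, huv, rfl, ?_⟩
    simp only [Walk.edges_cons, Walk.edges_nil, List.mem_cons, List.not_mem_nil, or_false]
      at h₁ h₂
    have h1 := hdisj u
    have h2 := hdisj v
    rcases h₁ with rfl | rfl | rfl <;> rcases h₂ with rfl | rfl | rfl <;> simp at h1 h2 ⊢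
  · simp only [Walk.length_cons] at hlen
    omega

/-- A path `x, u, v, y` whose outer edges are bridges of color `1` and whose middle edge is not a
bridge. -/
structure IsCriticalPath (G : SimpleGraph V) (b : Sym2 V → ℕ) (x u v y : V) : Prop where
  fst_isBridge : G.IsBridge s(x, u)
  snd_isBridge : G.IsBridge s(v, y)
  fst_color : b s(x, u) = 1
  snd_color : b s(v, y) = 1
  adj : G.Adj u v
  not_isBridge : ¬ G.IsBridge s(u, v)
  nodup : [x, u, v, y].Nodup

namespace IsCriticalPath

variable {b : Sym2 V → ℕ} {x u v y x' u' v' y' z : V}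

lemma symm (h : G.IsCriticalPath b x u v y) : G.IsCriticalPath b y v u x where
  fst_isBridge := Sym2.eq_swap ▸ h.snd_isBridge
  snd_isBridge := Sym2.eq_swap ▸ h.fst_isBridge
  fst_color := Sym2.eq_swap ▸ h.snd_color
  snd_color := Sym2.eq_swap ▸ h.fst_color
  adj := h.adj.symm
  not_isBridge := Sym2.eq_swap ▸ h.not_isBridge
  nodup := by simpa using List.nodup_reverse.2 h.nodup

lemma eq_of_adj (hconn : G.Connected)
    (hd : ∀ x y, ∃ q : G.Walk x y, q.IsPath ∧ q.length ≤ 3)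
    (h : G.IsCriticalPath b x u v y) (hz : G.Adj x z) : z = u := by
  by_contra hzu
  have hxu := hconn.adj_of_isBridge h.fst_isBridge
  have hvy := hconn.adj_of_isBridge h.snd_isBridge
  have huv := h.adj
  have hnd := h.nodup
  simp only [List.nodup_cons, List.mem_cons, List.not_mem_nil, or_false, not_or,
    List.nodup_nil, not_false_eq_true, and_true] at hnd
  have hzv : z ≠ v := by
    rintro rfl
    exact not_isBridge_of_triangle hxu huv hz h.fst_isBridge
  have hzy : z ≠ y := by
    rintro rfl
    have := isBridge_iff_forall_walk_mem_edges.1 h.fst_isBridge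
      (.cons hz (.cons hvy.symm (.cons huv.symm .nil)))
    simp only [Walk.edges_cons, Walk.edges_nil, List.mem_cons, List.not_mem_nil, or_false,
      Sym2.eq_iff] at this
    grind
  have hp : (Walk.cons hz.symm (.cons hxu (.cons huv (.cons hvy .nil)))).IsPath := by
    have := hz.ne
    simp [Walk.cons_isPath_iff]
    grind
  obtain ⟨q, hq, hlen⟩ := hd z y
  have h₁ := h.fst_isBridge.mem_edges_of_mem_edges_isPath hp (by simp) q
  have h₂ := h.snd_isBridge.mem_edges_of_mem_edges_isPath hp (by simp) q
  obtain ⟨a, c, -, -, -, ⟨he, -⟩ | ⟨he, -⟩⟩ := hq.exists_eq_of_length_le_three hlen h₁ h₂ (by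
    intro w hw hw'
    rw [Sym2.mem_iff] at hw hw'
    grind)
  · have := hz.ne
    rw [Sym2.eq_iff] at he
    grind
  · rw [Sym2.eq_iff] at he
    grind

lemma ne_of_isCriticalPath (hconn : G.Connected)
    (hd : ∀ x y, ∃ q : G.Walk x y, q.IsPath ∧ q.length ≤ 3)
    (h : G.IsCriticalPath b x u v y) (h' : G.IsCriticalPath b x' u' v' y') : x ≠ u' := by
  rintro rfl
  have h1 := h.eq_of_adj hconn hd h'.adj
  have h2 := h.eq_of_adj hconn hd (hconn.adj_of_isBridge h'.fst_isBridge).symm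
  have := h'.nodup
  simp [h1, h2] at this

lemma adj_of_ne (hconn : G.Connected)
    (hd : ∀ x y, ∃ q : G.Walk x y, q.IsPath ∧ q.length ≤ 3)
    (h : G.IsCriticalPath b x u v y) (h' : G.IsCriticalPath b x' u' v' y') (hne : u ≠ u') :
    G.Adj u u' := by
  obtain ⟨q, -, hlen⟩ := hd x x'
  rcases q with - | ⟨hxu, - | ⟨huv, - | ⟨hvy, - | ⟨hyw, q⟩⟩⟩⟩
  · exact absurd (h'.eq_of_adj hconn hd (hconn.adj_of_isBridge h.fst_isBridge)) hne
  · exact absurd (h.eq_of_adj hconn hd hxu) (h'.ne_of_isCriticalPath hconn hd h)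
  · obtain rfl := h.eq_of_adj hconn hd hxu
    exact absurd (h'.eq_of_adj hconn hd huv.symm) hne
  · obtain rfl := h.eq_of_adj hconn hd hxu
    obtain rfl := h'.eq_of_adj hconn hd hvy.symm
    exact huv
  · simp only [Walk.length_cons] at hlen
    omega

end IsCriticalPath

open Classical in
/-- The coloring that agrees with `b` on bridges, gives color `2` to `f`, color `0` to the other
edges of `T`, and color `1` to the remaining edges. -/
noncomputable def treeColoring (G T : SimpleGraph V) (b : Sym2 V → ℕ) (f e : Sym2 V) : ℕ :=
  if G.IsBridge e then b e else if e ∈ T.edgeSet then if e = f then 2 else 0 else 1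

section treeColoring

variable {T : SimpleGraph V} {b : Sym2 V → ℕ} {f e : Sym2 V}

lemma treeColoring_of_isBridge (he : G.IsBridge e) : treeColoring G T b f e = b e :=
  if_pos he

lemma treeColoring_of_notMem (he : ¬ G.IsBridge e) (heT : e ∉ T.edgeSet) :
    treeColoring G T b f e = 1 := by
  simp [treeColoring, he, heT]

lemma treeColoring_self (he : ¬ G.IsBridge f) (heT : f ∈ T.edgeSet) :
    treeColoring G T b f f = 2 := by
  simp [treeColoring, he, heT]

lemma treeColoring_of_ne (he : ¬ G.IsBridge e) (heT : e ∈ T.edgeSet) (hne : e ≠ f) :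
    treeColoring G T b f e = 0 := by
  simp [treeColoring, he, heT, hne]

lemma treeColoring_ne_two (he : ¬ G.IsBridge e) (hne : e ≠ f) :
    treeColoring G T b f e ≠ 2 := by
  simp only [treeColoring, if_neg he, if_neg hne]
  split_ifs <;> decide

lemma treeColoring_eq_one_of_mem (heT : e ∈ T.edgeSet) :
    treeColoring G T b f e = 1 ↔ G.IsBridge e ∧ b e = 1 := by
  unfold treeColoring
  split_ifs <;> simp_all

/-- A path of at most three bridges has a unique color if the coloring is proper on bridges. -/
lemma IsProperOnBridges.hasUniqueColor (hb : IsProperOnBridges G b) {x y : V} {p : G.Walk x y}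
    (hp : p.IsPath) (hxy : x ≠ y) (hlen : p.length ≤ 3) (h : ∀ e ∈ p.edges, G.IsBridge e) :
    p.HasUniqueColor b := by
  have hnd := hp.support_nodup
  unfold Walk.HasUniqueColor
  rcases p with - | ⟨hxu, - | ⟨huv, - | ⟨hvy, - | ⟨hyw, q⟩⟩⟩⟩
  · exact absurd rfl hxy
  · simp
  · rename_i u
    refine ⟨s(x, u), by simp, fun e' he' heq => ?_⟩
    by_contra hne
    have hu := hb.notMem (z := u) (h _ he') (h s(x, u) (by simp)) hne heq
    simp only [Walk.edges_cons, Walk.edges_nil, List.mem_cons, List.not_mem_nil, or_false] at he'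
    rcases he' with rfl | rfl <;> simp at hu
  · rename_i u v
    refine ⟨s(u, v), by simp, fun e' he' heq => ?_⟩
    by_contra hne
    have hu := hb.notMem (z := u) (h _ he') (h s(u, v) (by simp)) hne heq
    have hv := hb.notMem (z := v) (h _ he') (h s(u, v) (by simp)) hne heq
    simp only [Walk.edges_cons, Walk.edges_nil, List.mem_cons, List.not_mem_nil, or_false] at he'
    rcases he' with rfl | rfl | rfl <;> simp at hu hv
  · simp only [Walk.length_cons] at hlen
    omega

/-- Two vertices are joined by a path with a unique color of a tree coloring unless they are the
ends of a critical path. -/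
lemma exists_hasUniqueColor_or_isCriticalPath (hconn : G.Connected)
    (hd : ∀ x y, ∃ q : G.Walk x y, q.IsPath ∧ q.length ≤ 3) (hT : T.IsTree) (hle : T ≤ G)
    (hb : IsProperOnBridges G b) {x y : V} (hxy : x ≠ y) :
    (∃ p : G.Walk x y, p.IsPath ∧ p.HasUniqueColor (treeColoring G T b f)) ∨
      ∃ u v, G.IsCriticalPath b x u v y := by
  obtain ⟨p, hp⟩ := (hT.1 x y).exists_isPath
  have hpG := hp.mapLe hle
  have hpe := Walk.edges_mapLe_eq_edges hle (p := p)
  have hpT : ∀ e ∈ p.edges, e ∈ T.edgeSet := fun e he => p.edges_subset_edgeSet he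
  by_cases hall : ∀ e ∈ p.edges, G.IsBridge e
  · left
    obtain ⟨q, hq, hlen⟩ := hd x y
    obtain rfl := hpG.eq_of_forall_isBridge hq (by rwa [hpe])
    obtain ⟨e, he, hu⟩ := hb.hasUniqueColor hpG hxy hlen (by rwa [hpe])
    refine ⟨_, hpG, e, he, fun e' he' heq => hu e' he' ?_⟩
    rw [hpe] at he he'
    rwa [treeColoring_of_isBridge (hall e he), treeColoring_of_isBridge (hall e' he')] at heq
  push Not at hall
  obtain ⟨g, hg, hgb⟩ := hall
  by_cases hone : ∃ e ∈ p.edges, G.IsBridge e ∧ b e = 1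
  · obtain ⟨e₁, he₁, hb₁, hc₁⟩ := hone
    by_cases htwo : ∃ e₂ ∈ p.edges, (G.IsBridge e₂ ∧ b e₂ = 1) ∧ e₂ ≠ e₁
    · right
      obtain ⟨e₂, he₂, ⟨hb₂, hc₂⟩, hne⟩ := htwo
      obtain ⟨q, hq, hlen⟩ := hd x y
      rw [← hpe] at he₁ he₂ hg
      obtain ⟨u, v, hnd, huv, hqe, h⟩ := hq.exists_eq_of_length_le_three hlen
        (hb₁.mem_edges_of_mem_edges_isPath hpG he₁ q)
        (hb₂.mem_edges_of_mem_edges_isPath hpG he₂ q)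
        (fun z hz => hb.notMem hb₁ hb₂ hne.symm (hc₁.trans hc₂.symm) hz)
      have hnb (h₁ : G.IsBridge s(x, u)) (h₂ : G.IsBridge s(v, y)) : ¬ G.IsBridge s(u, v) := by
        intro h₃
        have := hq.eq_of_forall_isBridge hpG (by simp [hqe, h₁, h₂, h₃])
        rw [this, hqe] at hg
        simp only [List.mem_cons, List.not_mem_nil, or_false] at hg
        rcases hg with rfl | rfl | rfl <;> contradiction
      rcases h with ⟨rfl, rfl⟩ | ⟨rfl, rfl⟩
      · exact ⟨u, v, hb₁, hb₂, hc₁, hc₂, huv, hnb hb₁ hb₂, hnd⟩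
      · exact ⟨u, v, hb₂, hb₁, hc₂, hc₁, huv, hnb hb₂ hb₁, hnd⟩
    · left
      refine ⟨_, hpG, e₁, by rwa [hpe], fun e' he' heq => ?_⟩
      rw [hpe] at he'
      rw [(treeColoring_eq_one_of_mem (hpT e₁ he₁)).2 ⟨hb₁, hc₁⟩,
        treeColoring_eq_one_of_mem (hpT e' he')] at heq
      by_contra hne
      exact htwo ⟨e', he', heq, hne⟩
  · left
    obtain ⟨q, hq, m, hm, hmT, hu⟩ :=
      hT.exists_isPath_existsUnique_notMem_edgeSet hconn hle hp hg hgb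
    refine ⟨q, hq, m, hm, fun e he heq => ?_⟩
    rw [treeColoring_of_notMem (fun h => hmT (hT.edgeSet_of_isBridge hle h)) hmT] at heq
    by_contra hne
    have heT : e ∈ T.edgeSet := by
      by_contra h
      exact hne (hu e he h)
    rw [treeColoring_eq_one_of_mem heT] at heq
    have := heq.1.mem_edges_of_mem_edges_isPath hq he (p.mapLe hle)
    exact hone ⟨e, hpe ▸ this, heq⟩

/-- A tree containing all edges at `u₁` gives unique colors to the ends of every critical path,
where `f` is the middle edge of a critical path through `u₁`. -/
lemma IsCriticalPath.exists_hasUniqueColor (hconn : G.Connected)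
    (hd : ∀ x y, ∃ q : G.Walk x y, q.IsPath ∧ q.length ≤ 3) {x₁ u₁ u₂ y₁ x u v y : V}
    (h₁ : G.IsCriticalPath b x₁ u₁ u₂ y₁) (hT : ∀ w, G.Adj u₁ w → T.Adj u₁ w)
    (h : G.IsCriticalPath b x u v y) :
    ∃ p : G.Walk x y, p.IsPath ∧ p.HasUniqueColor (treeColoring G T b s(u₁, u₂)) := by
  have hxu := hconn.adj_of_isBridge h.fst_isBridge
  have hvy := hconn.adj_of_isBridge h.snd_isBridge
  have hnd := h.nodup
  simp only [List.nodup_cons, List.mem_cons, List.not_mem_nil, or_false, not_or,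
    List.nodup_nil, not_false_eq_true, and_true] at hnd
  have hcx : treeColoring G T b s(u₁, u₂) s(x, u) = 1 :=
    (treeColoring_of_isBridge h.fst_isBridge).trans h.fst_color
  have hcy : treeColoring G T b s(u₁, u₂) s(v, y) = 1 :=
    (treeColoring_of_isBridge h.snd_isBridge).trans h.snd_color
  by_cases huvT : T.Adj u v
  · refine ⟨.cons hxu (.cons h.adj (.cons hvy .nil)), ?_, s(u, v), by simp, ?_⟩
    · simp [Walk.cons_isPath_iff]
      grind
    · have : treeColoring G T b s(u₁, u₂) s(u, v) ≠ 1 := fun hh =>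
        h.not_isBridge ((treeColoring_eq_one_of_mem huvT).1 hh).1
      simp only [Walk.edges_cons, Walk.edges_nil, List.forall_mem_cons]
      simp [hcx, hcy, this.symm]
  have hu : u ≠ u₁ := by
    rintro rfl
    exact huvT (hT _ h.adj)
  have hv : v ≠ u₁ := by
    rintro rfl
    exact huvT (hT _ h.adj.symm).symm
  have huu : G.Adj u u₁ := h.adj_of_ne hconn hd h₁ hu
  have hvu : G.Adj v u₁ := h.symm.adj_of_ne hconn hd h₁ hv
  have hub : ¬ G.IsBridge s(u, u₁) := not_isBridge_of_triangle huu hvu.symm h.adj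
  have hvb : ¬ G.IsBridge s(u₁, v) := not_isBridge_of_triangle hvu.symm h.adj.symm huu.symm
  have hx₁ := h.ne_of_isCriticalPath hconn hd h₁
  have hx₂ := h.ne_of_isCriticalPath hconn hd h₁.symm
  have hy₁ := h.symm.ne_of_isCriticalPath hconn hd h₁
  have hy₂ := h.symm.ne_of_isCriticalPath hconn hd h₁.symm
  have h₁₂ := h₁.adj.ne
  have hp : (Walk.cons hxu (.cons huu (.cons hvu.symm (.cons hvy .nil)))).IsPath := by
    simp [Walk.cons_isPath_iff]
    grind
  have hcf := treeColoring_self (b := b) h₁.not_isBridge (hT _ h₁.adj)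
  by_cases hu₂ : u = u₂
  · subst hu₂
    have hcv := treeColoring_of_ne (b := b) (f := s(u₁, u)) hvb (hT _ hvu.symm)
      (by rw [ne_eq, Sym2.congr_right]; exact Ne.symm hnd.2.1.1)
    have hcu : treeColoring G T b s(u₁, u) s(u, u₁) = 2 := Sym2.eq_swap (a := u) ▸ hcf
    refine ⟨_, hp, s(u, u₁), by simp, ?_⟩
    simp only [Walk.edges_cons, Walk.edges_nil, List.forall_mem_cons]
    simp [hcx, hcy, hcv, hcu]
  have hcu := treeColoring_of_ne (b := b) (f := s(u₁, u₂)) (e := s(u, u₁)) hub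
    (hT _ huu.symm).symm (by rw [ne_eq, Sym2.eq_swap, Sym2.congr_right]; exact hu₂)
  by_cases hv₂ : v = u₂
  · subst hv₂
    refine ⟨_, hp, s(u₁, v), by simp, ?_⟩
    simp only [Walk.edges_cons, Walk.edges_nil, List.forall_mem_cons]
    simp [hcx, hcy, hcu, hcf]
  have hvu₂ : G.Adj u₂ v := h₁.symm.adj_of_ne hconn hd h.symm (Ne.symm hv₂)
  have hcv := treeColoring_ne_two (T := T) (b := b) (f := s(u₁, u₂))
    (not_isBridge_of_triangle hvu₂ hvu h₁.adj.symm)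
    (by rw [ne_eq, Sym2.eq_swap (a := u₁), Sym2.congr_right]; exact hv)
  refine ⟨.cons hxu (.cons huu (.cons h₁.adj (.cons hvu₂ (.cons hvy .nil)))), ?_, s(u₁, u₂),
    by simp, ?_⟩
  · simp [Walk.cons_isPath_iff]
    grind
  · simp only [Walk.edges_cons, Walk.edges_nil, List.forall_mem_cons]
    simp [hcx, hcy, hcu, hcf, hcv]

end treeColoring

lemma Connected.exists_isTree_le_of_star (hconn : G.Connected) (r : V) :
    ∃ T ≤ G, T.IsTree ∧ ∀ w, G.Adj r w → T.Adj r w := by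
  obtain ⟨T, hsT, hle, hT⟩ := hconn.exists_isTree_le_of_le_of_isAcyclic
    (inf_le_left : G ⊓ starGraph r ≤ G) ((isAcyclic_starGraph r).anti inf_le_right)
  exact ⟨T, hle, hT, fun w hw => hsT ⟨hw, starGraph_center_adj hw.ne⟩⟩

lemma Connected.exists_isCFConnColoring_treeColoring (hconn : G.Connected)
    (hd : ∀ x y, ∃ q : G.Walk x y, q.IsPath ∧ q.length ≤ 3) {b : Sym2 V → ℕ}
    (hb : IsProperOnBridges G b) :
    ∃ T f, IsCFConnColoring G (treeColoring G T b f) := by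
  by_cases hcrit : ∃ x u v y, G.IsCriticalPath b x u v y
  · obtain ⟨x₁, u₁, u₂, y₁, h₁⟩ := hcrit
    obtain ⟨T, hle, hT, hstar⟩ := hconn.exists_isTree_le_of_star u₁
    refine ⟨T, s(u₁, u₂), isCFConnColoring_of_hasUniqueColor fun x y hxy => ?_⟩
    obtain h | ⟨u, v, h⟩ :=
      exists_hasUniqueColor_or_isCriticalPath hconn hd hT hle hb hxy
    · exact h
    · exact h₁.exists_hasUniqueColor hconn hd hstar h
  · obtain ⟨T, hle, hT⟩ := hconn.exists_isTree_le
    obtain ⟨r⟩ := hconn.nonempty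
    refine ⟨T, s(r, r), isCFConnColoring_of_hasUniqueColor fun x y hxy => ?_⟩
    obtain h | ⟨u, v, h⟩ :=
      exists_hasUniqueColor_or_isCriticalPath hconn hd hT hle hb hxy
    · exact h
    · exact absurd ⟨x, u, v, y, h⟩ hcrit

end SimpleGraph

/-- For a connected graph `G` of diameter `3` with `h(G) ≥ 3`, `cfc(G) = h(G)`. -/
theorem cfConn_of_diam_three_of_hG_ge_three {V : Type*} [Fintype V]
    (G : SimpleGraph V) (hconn : G.Connected) (hdiam : G.diam = 3)
    (hh : 3 ≤ hG G) : cfConn G = hG G := by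
  refine le_antisymm ?_ hconn.hG_le_cfConn
  have hd (x y : V) : ∃ q : G.Walk x y, q.IsPath ∧ q.length ≤ 3 := by
    obtain ⟨q, hq, hlen⟩ := hconn.exists_path_of_dist x y
    refine ⟨q, hq, hlen.trans_le (hdiam ▸ dist_le_diam ?_)⟩
    exact ediam_ne_top_of_diam_ne_zero (by omega)
  obtain ⟨b, hlt, hproper⟩ := IsAcyclic.exists_proper_edge_coloring _ (bridgeGraph G) rfl
    hconn.isAcyclic_bridgeGraph hconn.ncard_neighborSet_bridgeGraph_le_hG
  have hb : IsProperOnBridges G b := fun x y z hy hz heq => by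
    by_contra hne
    exact hproper x y z (hconn.mem_edgeSet_bridgeGraph hy) (hconn.mem_edgeSet_bridgeGraph hz)
      hne heq
  obtain ⟨T, f, hc⟩ := hconn.exists_isCFConnColoring_treeColoring hd hb
  refine Nat.sInf_le ⟨_, fun e _ => ?_, hc⟩
  unfold treeColoring
  split_ifs with he
  · exact hlt e (hconn.mem_edgeSet_bridgeGraph he)
  all_goals omega
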